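/- arXiv:2406.19000 — 4 statements merged into one kernel-verified Lean document; each statement's English description precedes it below -/
import Mathlib

section
/- Let m > 0, h > 0, let V : ℝ → ℝ be differentiable, and let q_{j-1}, q_j, q_{j+1} ∈ ℝ. The real function x ↦ L_N(q_{j-1}, x) + L_N(x, q_{j+1}) has derivative zero at x = q_j if and only if (q_{j+1} − 2 q_j + q_{j-1})/h² + (1/(2m)) ( V'((q_j + q_{j+1})/2) + V'((q_{j-1} + q_j)/2) ) = 0. -/
/-- The Newmark discrete Lagrangian `L_N(qℓ, qr) = (m h/2)((qr − qℓ)/h)² − h V((qℓ + qr)/2)`. -/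
noncomputable def newmarkLagrangian (m h : ℝ) (V : ℝ → ℝ) (ql qr : ℝ) : ℝ :=
  m * h / 2 * ((qr - ql) / h) ^ 2 - h * V ((ql + qr) / 2)

/-!
The Newmark Lagrangian is symmetric in its two arguments, so one computation gives both of its
partial derivatives. The derivative of `x ↦ L_N(q_{j-1}, x) + L_N(x, q_{j+1})` at `q_j` is then
`-(m h)` times the left-hand side of the Newmark equation.
-/

section PartialDerivatives

variable {m h : ℝ} {V : ℝ → ℝ}

theorem newmarkLagrangian_comm (ql qr : ℝ) :
    newmarkLagrangian m h V ql qr = newmarkLagrangian m h V qr ql := by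
  simp only [newmarkLagrangian, div_pow, sub_sq_comm qr ql, add_comm ql qr]

theorem hasDerivAt_newmarkLagrangian_right {ql qr V' : ℝ}
    (hV : HasDerivAt V V' ((ql + qr) / 2)) :
    HasDerivAt (newmarkLagrangian m h V ql) (m * ((qr - ql) / h) - h / 2 * V') qr := by
  have velocity : HasDerivAt (fun x => (x - ql) / h) (1 / h) qr :=
    ((hasDerivAt_id qr).sub_const ql).div_const h
  have midpoint : HasDerivAt (fun x => (ql + x) / 2) (1 / 2) qr :=
    ((hasDerivAt_id qr).const_add ql).div_const 2
  have potential : HasDerivAt (fun x => V ((ql + x) / 2)) (V' * (1 / 2)) qr :=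
    hV.comp qr midpoint
  refine (((velocity.pow 2).const_mul (m * h / 2)).sub (potential.const_mul h)).congr_deriv ?_
  simp only [Nat.cast_ofNat, Nat.add_one_sub_one, pow_one]
  field_simp

theorem hasDerivAt_newmarkLagrangian_left {ql qr V' : ℝ}
    (hV : HasDerivAt V V' ((ql + qr) / 2)) :
    HasDerivAt (fun x => newmarkLagrangian m h V x qr) (m * ((ql - qr) / h) - h / 2 * V') ql := by
  simp only [newmarkLagrangian_comm _ qr]
  exact hasDerivAt_newmarkLagrangian_right (add_comm ql qr ▸ hV)

theorem hasDerivAt_newmarkLagrangian_add (hm : m ≠ 0) (hh : h ≠ 0) {qjm qj qjp Vl' Vr' : ℝ}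
    (hVl : HasDerivAt V Vl' ((qjm + qj) / 2)) (hVr : HasDerivAt V Vr' ((qj + qjp) / 2)) :
    HasDerivAt (fun x => newmarkLagrangian m h V qjm x + newmarkLagrangian m h V x qjp)
      (-(m * h) * ((qjp - 2 * qj + qjm) / h ^ 2 + 1 / (2 * m) * (Vr' + Vl'))) qj := by
  refine ((hasDerivAt_newmarkLagrangian_right hVl).add
    (hasDerivAt_newmarkLagrangian_left hVr)).congr_deriv ?_
  field_simp
  ring

end PartialDerivatives

theorem newmark_euler_lagrange_general {m h : ℝ} (hm : m ≠ 0) (hh : h ≠ 0) {V : ℝ → ℝ}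
    {qjm qj qjp : ℝ} (hVl : DifferentiableAt ℝ V ((qjm + qj) / 2))
    (hVr : DifferentiableAt ℝ V ((qj + qjp) / 2)) :
    deriv (fun x => newmarkLagrangian m h V qjm x + newmarkLagrangian m h V x qjp) qj = 0 ↔
      (qjp - 2 * qj + qjm) / h ^ 2
        + 1 / (2 * m) * (deriv V ((qj + qjp) / 2) + deriv V ((qjm + qj) / 2)) = 0 := by
  rw [(hasDerivAt_newmarkLagrangian_add hm hh hVl.hasDerivAt hVr.hasDerivAt).deriv]
  exact mul_eq_zero_iff_left (neg_ne_zero.mpr (mul_ne_zero hm hh))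

/-- the function `x ↦ L_N(q_{j-1}, x) + L_N(x, q_{j+1})` has derivative zero at
`x = q_j` iff the Newmark scheme equation holds. -/
theorem newmark_euler_lagrange (m h : ℝ) (hm : 0 < m) (hh : 0 < h)
    (V : ℝ → ℝ) (hV : Differentiable ℝ V) (qjm qj qjp : ℝ) :
    deriv (fun x => newmarkLagrangian m h V qjm x + newmarkLagrangian m h V x qjp) qj = 0 ↔
      (qjp - 2 * qj + qjm) / h ^ 2
        + 1 / (2 * m) * (deriv V ((qj + qjp) / 2) + deriv V ((qjm + qj) / 2)) = 0 :=
  newmark_euler_lagrange_general hm.ne' hh.ne' (hV _) (hV _)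
end

section
/- Let m, h > 0, let V : ℝ → ℝ be differentiable at q_m, and let q_ℓ, q_m, q_r ∈ ℝ. Then the partial derivative of the Simpson discrete Lagrangian L_S with respect to its middle argument at (q_ℓ, q_m, q_r) equals (16 m/(3h)) ( q_m − (q_ℓ + q_r)/2 ) − (2h/3) V'(q_m); consequently ∂L_S/∂q_m (q_ℓ, q_m, q_r) = 0 if and only if q_m − (h²/(8m)) V'(q_m) = (q_ℓ + q_r)/2. -/
/-- The Simpson discrete Lagrangian
`L_S(qℓ, qm, qr) = (m h/12)(gℓ² + 4 gm² + gr²) − (h/6)(V(qℓ) + 4 V(qm) + V(qr))`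
with `gℓ = (−3 qℓ + 4 qm − qr)/h`, `gm = (qr − qℓ)/h`, `gr = (qℓ − 4 qm + 3 qr)/h`. -/
noncomputable def simpsonLagrangian (m h : ℝ) (V : ℝ → ℝ) (ql qm qr : ℝ) : ℝ :=
  m * h / 12 * (((-3 * ql + 4 * qm - qr) / h) ^ 2 + 4 * ((qr - ql) / h) ^ 2
      + ((ql - 4 * qm + 3 * qr) / h) ^ 2)
    - h / 6 * (V ql + 4 * V qm + V qr)

/-!
With `u = qm - (ql + qr) / 2` and `d = qr - ql`, the outer velocities are `(d + 4 * u) / h` and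
`(d - 4 * u) / h`, so the cross terms in the sum of their squares cancel: as a function of the
middle point, the kinetic part is a pure quadratic in `u` plus a constant.
-/

theorem simpsonLagrangian_eq_sq_sub_midpoint (m h : ℝ) (V : ℝ → ℝ) (ql qm qr : ℝ) :
    simpsonLagrangian m h V ql qm qr =
      8 * m / (3 * h) * (qm - (ql + qr) / 2) ^ 2 + m / (2 * h) * (qr - ql) ^ 2
        - h / 6 * (V ql + 4 * V qm + V qr) := by
  unfold simpsonLagrangian
  field_simp
  ring

theorem hasDerivAt_simpsonLagrangian_middle (m h : ℝ) {V : ℝ → ℝ} {V' qm : ℝ} (ql qr : ℝ)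
    (hV : HasDerivAt V V' qm) :
    HasDerivAt (fun x => simpsonLagrangian m h V ql x qr)
      (16 * m / (3 * h) * (qm - (ql + qr) / 2) - 2 * h / 3 * V') qm := by
  simp only [simpsonLagrangian_eq_sq_sub_midpoint]
  have kinetic : HasDerivAt
      (fun x => 8 * m / (3 * h) * (x - (ql + qr) / 2) ^ 2 + m / (2 * h) * (qr - ql) ^ 2)
      (16 * m / (3 * h) * (qm - (ql + qr) / 2)) qm := by
    refine (((((hasDerivAt_id' qm).sub_const _).fun_pow 2).const_mul _).add_const _).congr_deriv ?_
    ring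
  have potential : HasDerivAt (fun x => h / 6 * (V ql + 4 * V x + V qr)) (2 * h / 3 * V') qm := by
    refine ((((hV.const_mul 4).const_add _).add_const _).const_mul _).congr_deriv ?_
    ring
  exact kinetic.fun_sub potential

theorem deriv_simpsonLagrangian_middle_eq_zero_iff {m h : ℝ} (hm : m ≠ 0) (hh : h ≠ 0)
    {V : ℝ → ℝ} {V' qm : ℝ} (ql qr : ℝ) (hV : HasDerivAt V V' qm) :
    deriv (fun x => simpsonLagrangian m h V ql x qr) qm = 0 ↔
      qm - h ^ 2 / (8 * m) * V' = (ql + qr) / 2 := by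
  have deriv_factored : deriv (fun x => simpsonLagrangian m h V ql x qr) qm =
      16 * m / (3 * h) * (qm - h ^ 2 / (8 * m) * V' - (ql + qr) / 2) := by
    rw [(hasDerivAt_simpsonLagrangian_middle m h ql qr hV).deriv]
    field_simp
    ring
  have coeff_ne_zero : 16 * m / (3 * h) ≠ 0 := by positivity
  rw [deriv_factored, mul_eq_zero_iff_left coeff_ne_zero, sub_eq_zero]

/-- the partial derivative of the Simpson discrete Lagrangian with respect to
its middle argument, and the resulting implicit midpoint equation. -/
theorem simpson_middle_derivative (m h : ℝ) (hm : 0 < m) (hh : 0 < h)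
    (V : ℝ → ℝ) (ql qm qr : ℝ) (hV : DifferentiableAt ℝ V qm) :
    deriv (fun x => simpsonLagrangian m h V ql x qr) qm
        = 16 * m / (3 * h) * (qm - (ql + qr) / 2) - 2 * h / 3 * deriv V qm ∧
      (deriv (fun x => simpsonLagrangian m h V ql x qr) qm = 0 ↔
        qm - h ^ 2 / (8 * m) * deriv V qm = (ql + qr) / 2) := by
  exact ⟨(hasDerivAt_simpsonLagrangian_middle m h ql qr hV.hasDerivAt).deriv,
    deriv_simpsonLagrangian_middle_eq_zero_iff hm.ne' hh.ne' ql qr hV.hasDerivAt⟩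
end

section
/- Let m, h > 0, let V : ℝ → ℝ be differentiable, and let q_{j-1}, q_{j-1/2}, q_j, q_{j+1/2}, q_{j+1} ∈ ℝ satisfy the midpoint equations q_{j-1/2} − (h²/(8m)) V'(q_{j-1/2}) = (q_{j-1} + q_j)/2 and q_{j+1/2} − (h²/(8m)) V'(q_{j+1/2}) = (q_j + q_{j+1})/2. Then the discrete Euler–Lagrange equation ∂L_S/∂q_r (q_{j-1}, q_{j-1/2}, q_j) + ∂L_S/∂q_ℓ (q_j, q_{j+1/2}, q_{j+1}) = 0 holds if and only if (q_{j-1} − 2 q_j + q_{j+1})/h² + (1/(3m)) ( V'(q_{j-1/2}) + V'(q_j) + V'(q_{j+1/2}) ) = 0. -/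
/-! The midpoint equation eliminates `qm` from the end-point derivatives of the Lagrangian, leaving
`∂L/∂qr = m (qr - ql) / h - h / 6 * (2 V'(qm) + V'(qr))`; as `L` is symmetric in `ql` and `qr`,
`∂L/∂ql` is the same expression with `ql` and `qr` exchanged. Adding the two contributions at the
common node gives `-(m h)` times the left-hand side of the node equation. -/

section SimpsonLagrangian

lemma simpsonLagrangian_swap (m h : ℝ) (V : ℝ → ℝ) (ql qm qr : ℝ) :
    simpsonLagrangian m h V ql qm qr = simpsonLagrangian m h V qr qm ql := by
  unfold simpsonLagrangian
  ring

variable {m h : ℝ} {V : ℝ → ℝ} {ql qm qr : ℝ}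

lemma hasDerivAt_simpsonLagrangian_right {dVr : ℝ} (hh : h ≠ 0) (hV : HasDerivAt V dVr qr) :
    HasDerivAt (fun x => simpsonLagrangian m h V ql qm x)
      (m / (3 * h) * (ql - 8 * qm + 7 * qr) - h / 6 * dVr) qr := by
  have hid := hasDerivAt_id' qr
  have hleft := ((hid.const_sub (-3 * ql + 4 * qm)).div_const h).fun_pow 2
  have hmid := (((hid.sub_const ql).div_const h).fun_pow 2).const_mul 4
  have hright := (((hid.const_mul 3).const_add (ql - 4 * qm)).div_const h).fun_pow 2
  have hkinetic := ((hleft.fun_add hmid).fun_add hright).const_mul (m * h / 12)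
  have hpotential := (hV.const_add (V ql + 4 * V qm)).const_mul (h / 6)
  refine (hkinetic.fun_sub hpotential).congr_deriv ?_
  push_cast
  field_simp
  ring

lemma deriv_simpsonLagrangian_right_of_midpoint {dVm : ℝ} (hm : m ≠ 0) (hh : h ≠ 0)
    (hV : DifferentiableAt ℝ V qr) (hmid : qm - h ^ 2 / (8 * m) * dVm = (ql + qr) / 2) :
    deriv (fun x => simpsonLagrangian m h V ql qm x) qr =
      m * (qr - ql) / h - h / 6 * (2 * dVm + deriv V qr) := by
  rw [(hasDerivAt_simpsonLagrangian_right hh hV.hasDerivAt).deriv, eq_add_of_sub_eq hmid]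
  field_simp
  ring

lemma deriv_simpsonLagrangian_left_of_midpoint {dVm : ℝ} (hm : m ≠ 0) (hh : h ≠ 0)
    (hV : DifferentiableAt ℝ V ql) (hmid : qm - h ^ 2 / (8 * m) * dVm = (ql + qr) / 2) :
    deriv (fun x => simpsonLagrangian m h V x qm qr) ql =
      m * (ql - qr) / h - h / 6 * (2 * dVm + deriv V ql) := by
  simp_rw [simpsonLagrangian_swap m h V _ qm qr]
  exact deriv_simpsonLagrangian_right_of_midpoint hm hh hV (by rw [hmid, add_comm])

end SimpsonLagrangian

theorem simpson_euler_lagrange_node_general {m h : ℝ} (hm : m ≠ 0) (hh : h ≠ 0)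
    {V : ℝ → ℝ} {qjm qjmh qj qjph qjp : ℝ}
    (hV : ∀ q ∈ ({qjmh, qj, qjph} : Set ℝ), DifferentiableAt ℝ V q)
    (hmidL : qjmh - h ^ 2 / (8 * m) * deriv V qjmh = (qjm + qj) / 2)
    (hmidR : qjph - h ^ 2 / (8 * m) * deriv V qjph = (qj + qjp) / 2) :
    deriv (fun x => simpsonLagrangian m h V qjm qjmh x) qj
        + deriv (fun x => simpsonLagrangian m h V x qjph qjp) qj = 0 ↔
      (qjm - 2 * qj + qjp) / h ^ 2
        + 1 / (3 * m) * (deriv V qjmh + deriv V qj + deriv V qjph) = 0 := by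
  have hVj : DifferentiableAt ℝ V qj := hV qj (by simp)
  rw [deriv_simpsonLagrangian_right_of_midpoint hm hh hVj hmidL,
    deriv_simpsonLagrangian_left_of_midpoint hm hh hVj hmidR]
  have hresidual : m * (qj - qjm) / h - h / 6 * (2 * deriv V qjmh + deriv V qj)
        + (m * (qj - qjp) / h - h / 6 * (2 * deriv V qjph + deriv V qj)) =
      -(m * h) * ((qjm - 2 * qj + qjp) / h ^ 2
        + 1 / (3 * m) * (deriv V qjmh + deriv V qj + deriv V qjph)) := by
    field_simp
    ring
  rw [hresidual, mul_eq_zero_iff_left (neg_ne_zero.mpr (mul_ne_zero hm hh))]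

/-- under the midpoint equations, the discrete Euler–Lagrange equation
for the Simpson scheme is equivalent to the node equation. -/
theorem simpson_euler_lagrange_node (m h : ℝ) (hm : 0 < m) (hh : 0 < h)
    (V : ℝ → ℝ) (hV : Differentiable ℝ V)
    (qjm qjmh qj qjph qjp : ℝ)
    (hmidL : qjmh - h ^ 2 / (8 * m) * deriv V qjmh = (qjm + qj) / 2)
    (hmidR : qjph - h ^ 2 / (8 * m) * deriv V qjph = (qj + qjp) / 2) :
    deriv (fun x => simpsonLagrangian m h V qjm qjmh x) qj
        + deriv (fun x => simpsonLagrangian m h V x qjph qjp) qj = 0 ↔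
      (qjm - 2 * qj + qjp) / h ^ 2
        + 1 / (3 * m) * (deriv V qjmh + deriv V qj + deriv V qjph) = 0 :=
  simpson_euler_lagrange_node_general hm.ne' hh.ne' (fun q _ => hV q) hmidL hmidR
end

section
/- Let ω > 0, k ∈ (0, 1), T > 0, and let φ : [0, T/4] → ℝ be differentiable with φ(0) = π/2, φ(T/4) = 0, φ'(t) = −ω √(1 − k² sin²(φ(t))) for all t ∈ [0, T/4], and φ(t) ∈ [0, π/2] for all t ∈ [0, T/4]. Then ω T/4 = ∫₀^{π/2} dξ / √(1 − k² sin² ξ) = K(k²); i.e. the period T of the nonlinear pendulum satisfies T = (4/ω) K(k²). -/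
/-- The complete elliptic integral of the first kind
`K(m) = ∫₀^{π/2} dξ / √(1 − m sin² ξ)`. -/
noncomputable def ellipticK (m : ℝ) : ℝ :=
  ∫ ξ in (0 : ℝ)..(Real.pi / 2), 1 / Real.sqrt (1 - m * Real.sin ξ ^ 2)

/-!
With `m = k²` the equation `φ' = -ω √(1 - m sin² φ)` is separable, and `√(1 - m sin² φ)` does not
vanish when `m < 1`. Dividing by it and substituting `ξ = φ t` turns `∫ ω dt` over a quarter period
into the integral of `1 / √(1 - m sin² ξ)` over the angles swept, from `π / 2` down to `0`.
-/

section

open MeasureTheory Real Set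
open scoped Interval

theorem integral_inv_eq_integral_of_hasDerivWithinAt_mul {a b : ℝ} {x g v : ℝ → ℝ}
    (hx : ContinuousOn x [[a, b]])
    (hx' : ∀ t ∈ Ioo (min a b) (max a b), HasDerivWithinAt x (g t * v (x t)) (Ioi t) t)
    (hg : IntervalIntegrable g volume a b) (hv : ContinuousOn v (x '' [[a, b]]))
    (hv₀ : ∀ y ∈ x '' [[a, b]], v y ≠ 0) :
    ∫ y in x a..x b, (v y)⁻¹ = ∫ t in a..b, g t := by
  have hv_inv : ContinuousOn (fun y ↦ (v y)⁻¹) (x '' [[a, b]]) := hv.inv₀ hv₀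
  have hcancel : EqOn (fun t ↦ (v (x t))⁻¹ * (g t * v (x t))) g [[a, b]] := fun t ht ↦ by
    have := hv₀ (x t) (mem_image_of_mem x ht)
    field_simp
  calc ∫ y in x a..x b, (v y)⁻¹
    _ = ∫ t in a..b, (v (x t))⁻¹ * (g t * v (x t)) :=
      (intervalIntegral.integral_comp_mul_deriv''' hx hx'
        (hv_inv.mono (image_mono Ioo_subset_Icc_self))
        (hv_inv.integrableOn_compact (isCompact_uIcc.image_of_continuousOn hx))
        (((intervalIntegrable_iff').mp hg).congr_fun hcancel.symm measurableSet_uIcc)).symm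
    _ = ∫ t in a..b, g t := intervalIntegral.integral_congr hcancel

theorem one_sub_mul_sin_sq_pos {m : ℝ} (hm : m < 1) (ξ : ℝ) : 0 < 1 - m * sin ξ ^ 2 := by
  rcases le_total m 0 with hm₀ | hm₀
  · linarith [mul_nonpos_of_nonpos_of_nonneg hm₀ (sq_nonneg (sin ξ))]
  · linarith [mul_le_of_le_one_right hm₀ (sin_sq_le_one ξ)]

theorem pendulum_period_elliptic_general {ω m T : ℝ} (hm : m < 1) {φ : ℝ → ℝ}
    (hφ0 : φ 0 = π / 2) (hφT4 : φ (T / 4) = 0)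
    (hφ' : ∀ t ∈ [[0, T / 4]],
      HasDerivWithinAt φ (-ω * √(1 - m * sin (φ t) ^ 2)) [[0, T / 4]] t) :
    ω * T / 4 = ellipticK m := by
  have hφ'_right : ∀ t ∈ Ioo (min 0 (T / 4)) (max 0 (T / 4)),
      HasDerivWithinAt φ (-ω * √(1 - m * sin (φ t) ^ 2)) (Ioi t) t := fun t ht ↦
    ((hφ' t (Ioo_subset_Icc_self ht)).hasDerivAt (Icc_mem_nhds ht.1 ht.2)).hasDerivWithinAt
  have hseparated : ∫ ξ in φ 0..φ (T / 4), (√(1 - m * sin ξ ^ 2))⁻¹ = ∫ _ in 0..T / 4, -ω :=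
    integral_inv_eq_integral_of_hasDerivWithinAt_mul (v := fun ξ ↦ √(1 - m * sin ξ ^ 2))
      (fun t ht ↦ (hφ' t ht).continuousWithinAt) hφ'_right intervalIntegrable_const
      (by fun_prop) (fun ξ _ ↦ (sqrt_pos.mpr (one_sub_mul_sin_sq_pos hm ξ)).ne')
  calc ω * T / 4
    _ = -∫ _ in 0..T / 4, -ω := by
      rw [intervalIntegral.integral_const, smul_eq_mul]
      ring
    _ = -∫ ξ in π / 2..0, (√(1 - m * sin ξ ^ 2))⁻¹ := by rw [← hseparated, hφ0, hφT4]
    _ = ellipticK m := by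
      simp only [ellipticK, one_div, intervalIntegral.integral_symm 0 (π / 2), neg_neg]

end

/-- the period of the nonlinear pendulum satisfies
`ω T/4 = K(k²)`, i.e. `T = (4/ω) K(k²)`. -/
theorem pendulum_period_elliptic (ω k T : ℝ) (hω : 0 < ω) (hk : k ∈ Set.Ioo (0 : ℝ) 1)
    (hT : 0 < T) (φ : ℝ → ℝ)
    (hφ0 : φ 0 = Real.pi / 2) (hφT4 : φ (T / 4) = 0)
    (hφ' : ∀ t ∈ Set.Icc (0 : ℝ) (T / 4),
      HasDerivAt φ (-ω * Real.sqrt (1 - k ^ 2 * Real.sin (φ t) ^ 2)) t)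
    (hφrange : ∀ t ∈ Set.Icc (0 : ℝ) (T / 4), φ t ∈ Set.Icc (0 : ℝ) (Real.pi / 2)) :
    ω * T / 4 = ∫ ξ in (0 : ℝ)..(Real.pi / 2), 1 / Real.sqrt (1 - k ^ 2 * Real.sin ξ ^ 2) ∧
      ω * T / 4 = ellipticK (k ^ 2) ∧ T = 4 / ω * ellipticK (k ^ 2) := by
  have hK : ω * T / 4 = ellipticK (k ^ 2) :=
    pendulum_period_elliptic_general (pow_lt_one₀ hk.1.le hk.2 two_ne_zero) hφ0 hφT4
      (Set.uIcc_of_le (by positivity : 0 ≤ T / 4) ▸ fun t ht ↦ (hφ' t ht).hasDerivWithinAt)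
  exact ⟨hK, hK, by rw [← hK]; field_simp⟩
end
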